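/- Let k > 1 and let x = 0x′ and y = αy′ be two vertices of the hierarchical graph H_{n,k}, where α ∈ Z_n with α ≠ 0 and x′, y′ ∈ Z_n^{k−1}. Then the graph distance between x and y in H_{n,k} equals ∂_{k−1}(x′, r) + 1 + ∂_{k−1}(y′, P), where ∂_{k−1} denotes graph distance in H_{n,k−1}, r is the all-zeros vertex of H_{n,k−1}, P is the set of vertices of H_{n,k−1} all of whose coordinates are nonzero, and ∂_{k−1}(v, S) denotes the minimum over u ∈ S of ∂_{k−1}(v, u). -/

import Mathlib

/-!
The first coordinate splits `H_{n,m+1}` into `n` blocks, each a copy of `H_{n,m}`. For `m ≥ 1` the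
only edges between different blocks join the root `0r` to the vertices `βp` with `β ≠ 0` and `p`
peripheral (rule 2), or join `βr` to `γr` with `β`, `γ` nonzero (rule 3); this is `adj_cons_cases`.

The upper bound follows the walk from `0x'` to `0r` inside block `0`, then the edge from `0r` to
`αp`, where `p` is a peripheral vertex nearest to `y'`, then from `αp` to `αy'` inside block `α`.

For the lower bound, consider the integer potential `f` with `f(0u) = -∂(u, r)` and
`f(βu) = 1 + ∂(u, P)` for `β ≠ 0`. It changes by at most one along every edge: inside a block
because distances do, on `0r ~ βp` because the values are `0` and `1`, and on `βr ~ γr` because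
the values agree. Hence `f(αy') - f(0x')`, which is the claimed value, bounds the distance from
below. Since `dist` is `0` for unreachable pairs, connectedness of `H_{n,m}` is also needed.
-/

/-- Rule (1): the two vertices agree on the first `k-1` coordinates and differ
(hence differ in the last coordinate). -/
def rule1 {n k : ℕ} (x y : Fin k → ZMod n) : Prop :=
  x ≠ y ∧ ∀ j : Fin k, (j : ℕ) + 1 < k → x j = y j

/-- Rule (2): `x = x_1…x_i 0…0` and `y = x_1…x_i x_{i+1}…x_k` with `x_j ≠ 0` for
`i+1 ≤ j ≤ k`, where `0 ≤ i ≤ k-2` (`i` is the length of the shared prefix,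
0-indexed coordinates `≥ i` are zero on the `x` side and nonzero on the `y` side). -/
def rule2 {n k : ℕ} (x y : Fin k → ZMod n) : Prop :=
  ∃ i : ℕ, i + 2 ≤ k ∧ (∀ j : Fin k, (j : ℕ) < i → x j = y j) ∧
    (∀ j : Fin k, i ≤ (j : ℕ) → x j = 0) ∧ (∀ j : Fin k, i ≤ (j : ℕ) → y j ≠ 0)

/-- Rule (3): `x = x_1…x_{i-1} x_i 0…0` and `y = x_1…x_{i-1} y_i 0…0` with
`x_i, y_i ≠ 0`, `x_i ≠ y_i` and `1 ≤ i ≤ k-1` (here `p` is the 0-indexed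
position `i-1`, so `p ≤ k-2`). -/
def rule3 {n k : ℕ} (x y : Fin k → ZMod n) : Prop :=
  ∃ p : Fin k, (p : ℕ) + 2 ≤ k ∧ (∀ j : Fin k, j < p → x j = y j) ∧
    x p ≠ 0 ∧ y p ≠ 0 ∧ x p ≠ y p ∧ (∀ j : Fin k, p < j → x j = 0 ∧ y j = 0)

/-- The hierarchical graph `H_{n,k}` on the vertex set `(Z_n)^k`, whose adjacency
is given exactly by the three rules above. -/
def hierGraph (n k : ℕ) : SimpleGraph (Fin k → ZMod n) :=
  SimpleGraph.fromRel (fun x y => rule1 x y ∨ rule2 x y ∨ rule3 x y)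

/-- The root vertex `00…0` of `H_{n,k}`. -/
def hierRoot (n k : ℕ) : Fin k → ZMod n := fun _ => 0

/-- The set of peripheral vertices of `H_{n,k}`: those all of whose coordinates
are nonzero. -/
def peripheral (n k : ℕ) : Set (Fin k → ZMod n) := {v | ∀ j, v j ≠ 0}

/-- The minimum graph distance from a vertex to a set of vertices. -/
noncomputable def distToSet {V : Type*} (G : SimpleGraph V) (v : V) (S : Set V) : ℕ :=
  sInf (G.dist v '' S)

/-- The eccentricity of a vertex: the maximum graph distance from it to any vertex. -/
noncomputable def eccentricity {V : Type*} (G : SimpleGraph V) (v : V) : ℕ :=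
  sSup (Set.range (G.dist v))

/-- The radius of a graph: the minimum eccentricity over all vertices. -/
noncomputable def graphRadius {V : Type*} (G : SimpleGraph V) : ℕ :=
  sInf (Set.range (eccentricity G))

/-- The degree of a vertex, as the number of its neighbors. -/
noncomputable def vdeg {V : Type*} (G : SimpleGraph V) (v : V) : ℕ :=
  (G.neighborSet v).ncard

/-- `ε_v`: the number of edges of the graph both of whose endpoints are
neighbors of `v`. -/
noncomputable def localEdges {V : Type*} (G : SimpleGraph V) (v : V) : ℕ :=
  {e : Sym2 V | e ∈ G.edgeSet ∧ ∀ w ∈ e, G.Adj v w}.ncard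

/-- The clustering coefficient `c(v) = 2 ε_v / (δ_v (δ_v - 1))` of a vertex `v`. -/
noncomputable def clustering {V : Type*} (G : SimpleGraph V) (v : V) : ℚ :=
  (2 * (localEdges G v : ℚ)) / ((vdeg G v : ℚ) * ((vdeg G v : ℚ) - 1))

/-- The vertex `z^{01} = 0101…` (1-indexed: 0 at odd positions, 1 at even). -/
def z01 (n k : ℕ) : Fin k → ZMod n := fun j => if (j : ℕ) % 2 = 0 then 0 else 1

/-- The vertex `z^{10} = 1010…` (1-indexed: 1 at odd positions, 0 at even). -/
def z10 (n k : ℕ) : Fin k → ZMod n := fun j => if (j : ℕ) % 2 = 0 then 1 else 0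

namespace HierGraph

theorem adj_cons {n m : ℕ} (a : ZMod n) {u v : Fin m → ZMod n} (h : (hierGraph n m).Adj u v) :
    (hierGraph n (m + 1)).Adj (Fin.cons a u : Fin (m + 1) → ZMod n) (Fin.cons a v) := by
  have key : ∀ u v : Fin m → ZMod n, (rule1 u v ∨ rule2 u v ∨ rule3 u v) →
      rule1 (Fin.cons a u : Fin (m + 1) → ZMod n) (Fin.cons a v) ∨
      rule2 (Fin.cons a u : Fin (m + 1) → ZMod n) (Fin.cons a v) ∨
      rule3 (Fin.cons a u : Fin (m + 1) → ZMod n) (Fin.cons a v) := by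
    rintro u v (⟨hne, h⟩ | ⟨i, hi, h1, h2, h3⟩ | ⟨p, hp, h1, h2, h3, h4, h5⟩)
    · left
      refine ⟨fun e => hne (Fin.cons_right_injective _ e), fun j => ?_⟩
      refine Fin.cases (fun _ => rfl) (fun j hj => ?_) j
      simpa using h j (by simpa using hj)
    · right; left
      refine ⟨i + 1, by omega, fun j => ?_, fun j => ?_, fun j => ?_⟩
      · refine Fin.cases (fun _ => rfl) (fun j hj => ?_) j
        simpa using h1 j (by simpa using hj)
      · refine Fin.cases (fun h => by simp at h) (fun j hj => ?_) j
        simpa using h2 j (by simpa using hj)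
      · refine Fin.cases (fun h => by simp at h) (fun j hj => ?_) j
        simpa using h3 j (by simpa using hj)
    · right; right
      refine ⟨p.succ, by simp; omega, fun j => ?_, by simpa using h2, by simpa using h3,
        by simpa using h4, fun j => ?_⟩
      · refine Fin.cases (fun _ => rfl) (fun j hj => ?_) j
        simpa using h1 j (by simpa using hj)
      · refine Fin.cases (fun h => by simp at h) (fun j hj => ?_) j
        simpa using h5 j (by simpa using hj)
  simp only [hierGraph, SimpleGraph.fromRel_adj] at h ⊢
  exact ⟨fun e => h.1 (Fin.cons_right_injective _ e), h.2.imp (key _ _) (key _ _)⟩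

/-- Block `a` as a copy of `H_{n,m}` inside `H_{n,m+1}`. -/
def blockHom (n m : ℕ) (a : ZMod n) : hierGraph n m →g hierGraph n (m + 1) where
  toFun u := Fin.cons a u
  map_rel' h := adj_cons a h

theorem root_adj {n m : ℕ} {a : ZMod n} (ha : a ≠ 0) {p : Fin m → ZMod n}
    (hp : p ∈ peripheral n m) :
    (hierGraph n (m + 1)).Adj (Fin.cons 0 (hierRoot n m) : Fin (m + 1) → ZMod n)
      (Fin.cons a p) := by
  have hne : (Fin.cons 0 (hierRoot n m) : Fin (m + 1) → ZMod n) ≠ Fin.cons a p := by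
    intro e
    have := congrFun e 0
    simp at this
    exact ha this.symm
  rw [hierGraph, SimpleGraph.fromRel_adj]
  refine ⟨hne, Or.inl ?_⟩
  -- Rule 2 requires two coordinates; with a single coordinate the edge comes from rule 1.
  rcases Nat.eq_zero_or_pos m with rfl | hm
  · exact Or.inl ⟨hne, fun j hj => absurd j.2 (by omega)⟩
  · refine Or.inr (Or.inl ⟨0, by omega, fun j hj => absurd hj (by omega), fun j _ => ?_,
      fun j _ => ?_⟩)
    · refine Fin.cases rfl (fun j => ?_) j
      simp [hierRoot]
    · refine Fin.cases (by simpa using ha) (fun j => ?_) j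
      simpa using hp j

/-- Classification of the edges of `H_{n,m+1}` by blocks. -/
theorem adj_cons_cases {n m : ℕ} (hm : 1 ≤ m) {a b : ZMod n} {u v : Fin m → ZMod n}
    (h : (hierGraph n (m + 1)).Adj (Fin.cons a u : Fin (m + 1) → ZMod n) (Fin.cons b v)) :
    (a = b ∧ (hierGraph n m).Adj u v) ∨
    (a = 0 ∧ b ≠ 0 ∧ u = hierRoot n m ∧ v ∈ peripheral n m) ∨
    (b = 0 ∧ a ≠ 0 ∧ v = hierRoot n m ∧ u ∈ peripheral n m) ∨
    (a ≠ 0 ∧ b ≠ 0 ∧ u = hierRoot n m ∧ v = hierRoot n m) := by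
  have key : ∀ (a b : ZMod n) (u v : Fin m → ZMod n),
      (rule1 (Fin.cons a u : Fin (m + 1) → ZMod n) (Fin.cons b v) ∨
      rule2 (Fin.cons a u : Fin (m + 1) → ZMod n) (Fin.cons b v) ∨
      rule3 (Fin.cons a u : Fin (m + 1) → ZMod n) (Fin.cons b v)) →
      (a = b ∧ (rule1 u v ∨ rule2 u v ∨ rule3 u v)) ∨
      (a = 0 ∧ b ≠ 0 ∧ u = hierRoot n m ∧ v ∈ peripheral n m) ∨
      (a ≠ 0 ∧ b ≠ 0 ∧ u = hierRoot n m ∧ v = hierRoot n m) := by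
    rintro a b u v (⟨hne, h⟩ | ⟨i, hi, h1, h2, h3⟩ | ⟨p, hp, h1, h2, h3, h4, h5⟩)
    · left
      have hab : a = b := by simpa using h 0 (by simpa using Nat.lt_of_lt_of_le Nat.one_pos hm)
      subst hab
      refine ⟨rfl, Or.inl ⟨fun e => hne (by rw [e]), fun j hj => ?_⟩⟩
      simpa using h j.succ (by simpa using hj)
    · rcases i with _ | i
      · right; left
        exact ⟨by simpa using h2 0 (by simp), by simpa using h3 0 (by simp),
          funext fun j => by simpa [hierRoot] using h2 j.succ (by simp),
          fun j => by simpa using h3 j.succ (by simp)⟩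
      · left
        refine ⟨by simpa using h1 0 (by simp), Or.inr (Or.inl ⟨i, by omega, fun j hj => ?_,
          fun j hj => ?_, fun j hj => ?_⟩)⟩
        · simpa using h1 j.succ (by simpa using hj)
        · simpa using h2 j.succ (by simpa using hj)
        · simpa using h3 j.succ (by simpa using hj)
    · revert hp h1 h2 h3 h4 h5
      refine Fin.cases ?_ (fun p => ?_) p
      · intro _ _ h2 h3 _ h5
        right; right
        exact ⟨by simpa using h2, by simpa using h3,
          funext fun j => by simpa [hierRoot] using (h5 j.succ (Fin.succ_pos j)).1,
          funext fun j => by simpa [hierRoot] using (h5 j.succ (Fin.succ_pos j)).2⟩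
      · intro hp h1 h2 h3 h4 h5
        left
        refine ⟨by simpa using h1 0 (Fin.succ_pos p), Or.inr (Or.inr ⟨p, ?_, fun j hj => ?_,
          by simpa using h2, by simpa using h3, by simpa using h4, fun j hj => ?_⟩)⟩
        · simp at hp; omega
        · simpa using h1 j.succ (by simpa using hj)
        · simpa using h5 j.succ (by simpa using hj)
  simp only [hierGraph, SimpleGraph.fromRel_adj] at h ⊢
  obtain ⟨hne, h | h⟩ := h
  · rcases key _ _ _ _ h with ⟨rfl, huv⟩ | h | h
    · exact Or.inl ⟨rfl, fun e => hne (by rw [e]), Or.inl huv⟩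
    · exact Or.inr (Or.inl h)
    · exact Or.inr (Or.inr (Or.inr h))
  · rcases key _ _ _ _ h with ⟨rfl, huv⟩ | h | h
    · exact Or.inl ⟨rfl, fun e => hne (by rw [e]), Or.inr huv⟩
    · exact Or.inr (Or.inr (Or.inl h))
    · exact Or.inr (Or.inr (Or.inr ⟨h.2.1, h.1, h.2.2.2, h.2.2.1⟩))

theorem peripheral_nonempty {n : ℕ} (hn : 2 ≤ n) (m : ℕ) : (peripheral n m).Nonempty := by
  have : Fact (1 < n) := ⟨hn⟩
  exact ⟨fun _ => 1, fun _ => one_ne_zero⟩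

theorem connected {n : ℕ} (hn : 2 ≤ n) (m : ℕ) : (hierGraph n m).Connected := by
  rw [SimpleGraph.connected_iff_exists_forall_reachable]
  refine ⟨hierRoot n m, ?_⟩
  induction m with
  | zero => intro v; rw [Subsingleton.elim v (hierRoot n 0)]
  | succ m ih =>
    intro w
    have hr : hierRoot n (m + 1) = Fin.cons 0 (hierRoot n m) := by
      funext j
      exact Fin.cases rfl (fun _ => rfl) j
    rw [hr]
    refine Fin.consCases (fun a v => ?_) w
    by_cases ha : a = 0
    · subst ha
      exact (ih v).map (blockHom n m 0)
    · obtain ⟨p, hp⟩ := peripheral_nonempty hn m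
      exact (root_adj ha hp).reachable.trans (((ih p).symm.trans (ih v)).map (blockHom n m a))

theorem exists_distToSet {V : Type*} (G : SimpleGraph V) (v : V) {S : Set V} (hS : S.Nonempty) :
    ∃ p ∈ S, G.dist v p = distToSet G v S :=
  Nat.sInf_mem (hS.image (G.dist v))

theorem distToSet_le {V : Type*} (G : SimpleGraph V) (v : V) {S : Set V} {p : V} (hp : p ∈ S) :
    distToSet G v S ≤ G.dist v p :=
  Nat.sInf_le ⟨p, hp, rfl⟩

theorem distToSet_le_of_adj {V : Type*} {G : SimpleGraph V} (hG : G.Connected) {u v : V}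
    (h : G.Adj u v) {S : Set V} (hS : S.Nonempty) :
    distToSet G u S ≤ distToSet G v S + 1 := by
  obtain ⟨p, hp, e⟩ := exists_distToSet G v hS
  have h1 := distToSet_le G u hp
  have h2 := hG.dist_triangle (u := u) (v := v) (w := p)
  have h3 := SimpleGraph.dist_eq_one_iff_adj.2 h
  omega

theorem dist_map_le {V W : Type*} {G : SimpleGraph V} {H : SimpleGraph W} (hG : G.Connected)
    (f : G →g H) (u v : V) : H.dist (f u) (f v) ≤ G.dist u v := by
  obtain ⟨w, hw⟩ := hG.exists_walk_length_eq_dist u v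
  rw [← hw, ← SimpleGraph.Walk.length_map f w]
  exact SimpleGraph.dist_le _

/-- The potential equal to `-∂(u, r)` at `0u` and to `1 + ∂(u, P)` at `βu` with `β ≠ 0`. -/
noncomputable def potential (n m : ℕ) (w : Fin (m + 1) → ZMod n) : ℤ :=
  if w 0 = 0 then -((hierGraph n m).dist (Fin.tail w) (hierRoot n m) : ℤ)
  else 1 + (distToSet (hierGraph n m) (Fin.tail w) (peripheral n m) : ℤ)

/-- One direction suffices, as adjacency is symmetric. -/
theorem potential_le_of_adj {n m : ℕ} (hn : 2 ≤ n) (hm : 1 ≤ m) {w z : Fin (m + 1) → ZMod n}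
    (h : (hierGraph n (m + 1)).Adj w z) : potential n m z ≤ potential n m w + 1 := by
  have hG := connected hn m
  revert h
  refine Fin.consCases (fun a u => ?_) w
  refine Fin.consCases (fun b v => ?_) z
  intro h
  simp only [potential, Fin.cons_zero, Fin.tail_cons]
  rcases adj_cons_cases hm h with ⟨rfl, huv⟩ | ⟨rfl, hb, rfl, hv⟩ | ⟨rfl, ha, rfl, hu⟩ |
    ⟨ha, hb, rfl, rfl⟩
  · split_ifs
    · have h2 := hG.dist_triangle (u := u) (v := v) (w := hierRoot n m)
      have h3 := SimpleGraph.dist_eq_one_iff_adj.2 huv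
      omega
    · have := distToSet_le_of_adj hG huv.symm (peripheral_nonempty hn m)
      omega
  · have := distToSet_le (hierGraph n m) v hv
    simp only [SimpleGraph.dist_self] at this ⊢
    rw [if_neg hb]
    simp
    omega
  · rw [if_neg ha]
    simp
    omega
  · rw [if_neg ha, if_neg hb]
    omega

theorem potential_le_walk {n m : ℕ} (hn : 2 ≤ n) (hm : 1 ≤ m) {w z : Fin (m + 1) → ZMod n}
    (p : (hierGraph n (m + 1)).Walk w z) : potential n m z ≤ potential n m w + p.length := by
  induction p with
  | nil => simp
  | cons h p ih =>
    have := potential_le_of_adj hn hm h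
    simp only [SimpleGraph.Walk.length_cons]
    push_cast
    omega

end HierGraph

open HierGraph in
/-- for `k = m + 1 > 1`, if `x = 0x'` and `y = αy'` with `α ≠ 0`,
then `∂_k(x,y) = ∂_{k-1}(x', r) + 1 + ∂_{k-1}(y', P)`. -/
theorem hierGraph_dist_zero_block (n m : ℕ) (hn : 2 ≤ n) (hm : 1 ≤ m)
    (α : ZMod n) (hα : α ≠ 0) (x' y' : Fin m → ZMod n) :
    (hierGraph n (m + 1)).dist (Fin.cons 0 x') (Fin.cons α y') =
      (hierGraph n m).dist x' (hierRoot n m) + 1 +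
        distToSet (hierGraph n m) y' (peripheral n m) := by
  have hG := connected hn m
  have hK := connected hn (m + 1)
  apply le_antisymm
  · obtain ⟨p, hp, e⟩ := exists_distToSet (hierGraph n m) y' (peripheral_nonempty hn m)
    have h1 : (hierGraph n (m + 1)).dist (Fin.cons 0 x') (Fin.cons 0 (hierRoot n m)) ≤ _ :=
      dist_map_le hG (blockHom n m 0) x' (hierRoot n m)
    have h2 := SimpleGraph.dist_eq_one_iff_adj.2 (root_adj hα hp)
    have h3 : (hierGraph n (m + 1)).dist (Fin.cons α p) (Fin.cons α y') ≤ _ :=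
      dist_map_le hG (blockHom n m α) p y'
    rw [SimpleGraph.dist_comm (u := p), e] at h3
    have t1 := hK.dist_triangle (u := Fin.cons 0 x') (v := Fin.cons 0 (hierRoot n m))
      (w := Fin.cons α y')
    have t2 := hK.dist_triangle (u := Fin.cons 0 (hierRoot n m)) (v := Fin.cons α p)
      (w := Fin.cons α y')
    omega
  · obtain ⟨p, hp⟩ := hK.exists_walk_length_eq_dist (Fin.cons 0 x') (Fin.cons α y')
    have := potential_le_walk hn hm p
    simp only [potential, Fin.cons_zero, Fin.tail_cons, if_neg hα, if_true] at this
    omega
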